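/- arXiv:math/0511018 — 2 statements merged into one kernel-verified Lean document; each statement's English description precedes it below -/
import Mathlib

section
/- Let n ≥ 1, 1 ≤ q ≤ n, let H be an n×n Hermitian matrix with real eigenvalues μ₁,…,μₙ listed with multiplicity, and let C ∈ ℝ. Then the following are equivalent: (i) H(u,u) ≥ C·|u|² for every (0,q)-coefficient system u on ℂⁿ; (ii) for every q-element subset S ⊆ {1,…,n} one has Σ_{i∈S} μᵢ ≥ C. -/
open scoped BigOperators
open MeasureTheory

namespace HM

/-- The finset of strictly increasing multi-indices of length `q` with entries in `Fin n`. -/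
def Incr (n q : ℕ) : Finset (Fin q → Fin n) :=
  Finset.univ.filter (fun I => ∀ a b : Fin q, a < b → I a < I b)

/-- Prepend the index `k` to a `(q-1)`-tuple `J`, giving the `q`-tuple `kJ`. -/
def cons' {n : ℕ} (q : ℕ) (k : Fin n) (J : Fin (q - 1) → Fin n) : Fin q → Fin n :=
  fun i => if h : (i : ℕ) = 0 then k else J ⟨(i : ℕ) - 1, by have := i.isLt; omega⟩

/-- A (0,q)-coefficient system: an antisymmetric assignment of complex numbers to q-tuples
(hence vanishing on tuples with a repeated index). -/
def IsCoeff {n q : ℕ} (u : (Fin q → Fin n) → ℂ) : Prop :=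
  ∀ (σ : Equiv.Perm (Fin q)) (I : Fin q → Fin n),
    u (I ∘ σ) = ((Equiv.Perm.sign σ : ℤ) : ℂ) * u I

/-- `|u|²`, the sum of `|u_I|²` over strictly increasing multi-indices `I`. -/
noncomputable def nSq {n q : ℕ} (u : (Fin q → Fin n) → ℂ) : ℝ :=
  ∑ I ∈ Incr n q, ‖u I‖ ^ 2

/-- The Hessian form of a matrix `H` on coefficient systems:
`H(u,v) = Σ'_{|J|=q-1} Σ_{k,l} H_{lk} u_{lJ} conj(v_{kJ})`. -/
noncomputable def mForm {n : ℕ} (q : ℕ) (H : Matrix (Fin n) (Fin n) ℂ)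
    (u v : (Fin q → Fin n) → ℂ) : ℂ :=
  ∑ J ∈ Incr n (q - 1), ∑ k : Fin n, ∑ l : Fin n,
    H l k * u (cons' q l J) * star (v (cons' q k J))

/-- `σ^I_J`: the sign of the permutation rearranging `I` into `J`; `0` if `J` is not a
rearrangement of `I` (in particular `0` if `I` has a repeated entry). -/
def permSign {n p : ℕ} (I J : Fin p → Fin n) : ℤ :=
  if Function.Injective I then
    ∑ π : Equiv.Perm (Fin p), if J = I ∘ π then ((Equiv.Perm.sign π : ℤ)) else 0
  else 0

/-- The Wirtinger derivative `∂f/∂z_k` of a complex-valued function, via real Fréchet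
derivatives: `½(∂f/∂x_k − i ∂f/∂y_k)`. -/
noncomputable def dz {n : ℕ} (f : (Fin n → ℂ) → ℂ) (k : Fin n) (z : Fin n → ℂ) : ℂ :=
  (1/2 : ℂ) * (fderiv ℝ f z (Pi.single k 1) - Complex.I * fderiv ℝ f z (Pi.single k Complex.I))

/-- The Wirtinger derivative `∂f/∂z̄_k`: `½(∂f/∂x_k + i ∂f/∂y_k)`. -/
noncomputable def dzbar {n : ℕ} (f : (Fin n → ℂ) → ℂ) (k : Fin n) (z : Fin n → ℂ) : ℂ :=
  (1/2 : ℂ) * (fderiv ℝ f z (Pi.single k 1) + Complex.I * fderiv ℝ f z (Pi.single k Complex.I))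

/-- The mixed Wirtinger Hessian `∂²f/∂z_l∂z̄_k` of a real-valued function. -/
noncomputable def hessW {n : ℕ} (f : (Fin n → ℂ) → ℝ) (l k : Fin n) (z : Fin n → ℂ) : ℂ :=
  dz (fun w => dzbar (fun y => (f y : ℂ)) k w) l z

/-- The Hessian form `i∂∂̄f(u,u)(z) = Σ'_{|J|=q-1} Σ_{k,l} ∂²f/∂z_l∂z̄_k(z) u_{lJ} conj(u_{kJ})`. -/
noncomputable def hForm {n : ℕ} (q : ℕ) (f : (Fin n → ℂ) → ℝ)
    (u : (Fin q → Fin n) → ℂ) (z : Fin n → ℂ) : ℂ :=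
  ∑ J ∈ Incr n (q - 1), ∑ k : Fin n, ∑ l : Fin n,
    hessW f l k z * u (cons' q l J) * star (u (cons' q k J))

/-- Coefficient of `∂̄u` on the `(q+1)`-tuple `M`:
`(∂̄u)_M = Σ_k Σ'_{|J|=q} σ^{kJ}_M ∂u_J/∂z̄_k`. -/
noncomputable def dbarC {n : ℕ} (q : ℕ) (u : (Fin q → Fin n) → (Fin n → ℂ) → ℂ)
    (M : Fin (q + 1) → Fin n) (z : Fin n → ℂ) : ℂ :=
  ∑ k : Fin n, ∑ J ∈ Incr n q, ((permSign (cons' (q + 1) k J) M : ℤ) : ℂ) * dzbar (u J) k z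

/-- Coefficient of `ϑu` on the `(q-1)`-tuple `J`: `(ϑu)_J = −Σ_l ∂u_{lJ}/∂z_l`. -/
noncomputable def thetaC {n : ℕ} (q : ℕ) (u : (Fin q → Fin n) → (Fin n → ℂ) → ℂ)
    (J : Fin (q - 1) → Fin n) (z : Fin n → ℂ) : ℂ :=
  -∑ l : Fin n, dz (u (cons' q l J)) l z

/-- Pointwise `|∂̄u|²`. -/
noncomputable def dbarSq {n : ℕ} (q : ℕ) (u : (Fin q → Fin n) → (Fin n → ℂ) → ℂ)
    (z : Fin n → ℂ) : ℝ :=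
  ∑ M ∈ Incr n (q + 1), ‖dbarC q u M z‖ ^ 2

/-- Pointwise `|ϑu|²`. -/
noncomputable def thetaSq {n : ℕ} (q : ℕ) (u : (Fin q → Fin n) → (Fin n → ℂ) → ℂ)
    (z : Fin n → ℂ) : ℝ :=
  ∑ J ∈ Incr n (q - 1), ‖thetaC q u J z‖ ^ 2

/-- Remove the `i`-th entry of a `j`-tuple, giving a `(j-1)`-tuple. -/
def removeIdx {n j : ℕ} (I : Fin j → Fin n) (i : Fin j) : Fin (j - 1) → Fin n :=
  fun t => if (t : ℕ) < (i : ℕ) then I ⟨t, by have := t.isLt; omega⟩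
    else I ⟨(t : ℕ) + 1, by have := t.isLt; omega⟩

/-- The increasing `j`-tuple listing a finset `S` (with default `d` out of range). -/
def sortedTuple {n : ℕ} (j : ℕ) (S : Finset (Fin n)) (d : Fin n) : Fin j → Fin n :=
  fun t => (S.sort (· ≤ ·)).getD t d

end HM

namespace HMaux
open HM Finset

lemma mem_Incr {n q : ℕ} (I : Fin q → Fin n) : I ∈ Incr n q ↔ StrictMono I := by
  simp [Incr, StrictMono]

lemma coeff_zero {n q : ℕ} {u : (Fin q → Fin n) → ℂ} (hu : IsCoeff u) (I : Fin q → Fin n)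
    (hI : ¬ Function.Injective I) : u I = 0 := by
  simp only [Function.Injective, not_forall] at hI
  obtain ⟨a, b, h, hab⟩ := hI
  have := hu (Equiv.swap a b) I
  have e : I ∘ Equiv.swap a b = I := by
    funext x
    simp only [Function.comp]
    rcases eq_or_ne x a with rfl | hxa
    · simp [h]
    · rcases eq_or_ne x b with rfl | hxb
      · simp [h]
      · rw [Equiv.swap_apply_of_ne_of_ne hxa hxb]
  rw [e, Equiv.Perm.sign_swap hab] at this
  push_cast at this
  linear_combination this / 2

lemma sum_all {n q : ℕ} (f : (Fin q → Fin n) → ℝ)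
    (hs : ∀ (σ : Equiv.Perm (Fin q)) I, f (I ∘ σ) = f I)
    (h0 : ∀ I, ¬ Function.Injective I → f I = 0) :
    ∑ I, f I = (q.factorial : ℝ) * ∑ I ∈ Incr n q, f I := by
  classical
  have h1 : ∑ I, f I = ∑ I ∈ univ.filter (fun I : Fin q → Fin n => Function.Injective I), f I := by
    rw [Finset.sum_filter]
    refine Finset.sum_congr rfl fun I _ => ?_
    split_ifs with h
    · rfl
    · exact h0 I h
  have h2 : ∑ x ∈ Incr n q ×ˢ (univ : Finset (Equiv.Perm (Fin q))), f x.1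
      = ∑ I ∈ univ.filter (fun I : Fin q → Fin n => Function.Injective I), f I := by
    refine Finset.sum_nbij (fun x => x.1 ∘ x.2) ?_ ?_ ?_ ?_
    · rintro ⟨I, σ⟩ h
      simp only [mem_product, mem_Incr, mem_univ, and_true] at h
      simpa using h.injective
    · rintro ⟨I, σ⟩ h ⟨I', σ'⟩ h' he
      simp only [coe_product, Set.mem_prod, mem_coe, mem_Incr, mem_univ, and_true] at h h'
      simp only at he
      have hr : Set.range I = Set.range I' := by
        have := congrArg Set.range he
        rwa [σ.surjective.range_comp, σ'.surjective.range_comp] at this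
      have hI : I = I' := (h.range_inj h').1 hr
      subst hI
      have : σ = σ' := by
        ext x
        have := h.injective (congrFun he x)
        simp [this]
      rw [this]
    · intro K hK
      simp only [coe_filter, mem_univ, true_and, Set.mem_ofPred_eq] at hK
      refine ⟨(K ∘ Tuple.sort K, (Tuple.sort K)⁻¹), ?_, ?_⟩
      · simp only [coe_product, Set.mem_prod, mem_coe, mem_Incr, mem_univ, and_true]
        exact (Tuple.monotone_sort K).strictMono_of_injective
          (hK.comp (Tuple.sort K).injective)
      · funext x
        simp
    · rintro ⟨I, σ⟩ _
      exact (hs σ I).symm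
  rw [h1, ← h2, Finset.sum_product]
  simp [Fintype.card_perm, Finset.mul_sum]

noncomputable def T {n q : ℕ} (A : Matrix (Fin n) (Fin n) ℂ) (u : (Fin q → Fin n) → ℂ) :
    (Fin q → Fin n) → ℂ :=
  fun K => ∑ I : Fin q → Fin n, (∏ a, A (I a) (K a)) * u I

lemma T_coeff {n q : ℕ} (A : Matrix (Fin n) (Fin n) ℂ) {u : (Fin q → Fin n) → ℂ}
    (hu : IsCoeff u) : IsCoeff (T A u) := by
  intro σ K
  unfold T
  rw [Finset.mul_sum]
  rw [← (Equiv.arrowCongr σ.symm (Equiv.refl (Fin n))).sum_comp]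
  refine Finset.sum_congr rfl fun I _ => ?_
  have : (Equiv.arrowCongr σ.symm (Equiv.refl (Fin n))) I = I ∘ σ := by
    funext x; simp [Equiv.arrowCongr]
  rw [this, hu σ I]
  have : ∏ a, A ((I ∘ σ) a) ((K ∘ σ) a) = ∏ a, A (I a) (K a) :=
    Equiv.prod_comp σ (fun a => A (I a) (K a))
  rw [this]
  ring

lemma sum_prod {n q : ℕ} (g : Fin q → Fin n → ℂ) :
    ∑ K : Fin q → Fin n, ∏ a, g a (K a) = ∏ a, ∑ k, g a k := by
  rw [Finset.prod_univ_sum]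
  simp

lemma prod_one {n q : ℕ} (L K : Fin q → Fin n) :
    ∏ a, (1 : Matrix (Fin n) (Fin n) ℂ) (L a) (K a) = if L = K then 1 else 0 := by
  split_ifs with h
  · subst h; simp
  · obtain ⟨a, ha⟩ := Function.ne_iff.1 h
    exact Finset.prod_eq_zero (mem_univ a) (Matrix.one_apply_ne ha)

lemma T_T {n q : ℕ} (A B : Matrix (Fin n) (Fin n) ℂ) (h : B * A = 1)
    (w : (Fin q → Fin n) → ℂ) : T A (T B w) = w := by
  funext K
  unfold T
  simp only [Finset.mul_sum]
  rw [Finset.sum_comm]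
  have : ∀ L : Fin q → Fin n, ∑ I : Fin q → Fin n,
      (∏ a, A (I a) (K a)) * ((∏ a, B (L a) (I a)) * w L) = (if L = K then 1 else 0) * w L := by
    intro L
    rw [← prod_one, ← h]
    simp only [Matrix.mul_apply]
    rw [← sum_prod, Finset.sum_mul]
    refine Finset.sum_congr rfl fun I _ => ?_
    rw [Finset.prod_mul_distrib]; ring
  simp [this]

lemma key {n q : ℕ} (U : Matrix (Fin n) (Fin n) ℂ) (u : (Fin q → Fin n) → ℂ)
    (c : Fin q → Fin n → ℂ) :
    ∑ K, (∏ a, c a (K a)) * (T U u K * star (T U u K)) =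
      ∑ I, ∑ I', (∏ a, ∑ k, U (I a) k * c a k * star (U (I' a) k)) * (u I * star (u I')) := by
  simp only [← sum_prod (fun a k => U (_ : Fin n) k * c a k * star (U (_ : Fin n) k)), T,
    star_sum, Finset.sum_mul_sum]
  simp only [Finset.sum_mul, Finset.mul_sum]
  rw [Finset.sum_comm]
  refine Finset.sum_congr rfl fun I _ => ?_
  rw [Finset.sum_comm]
  refine Finset.sum_congr rfl fun I' _ => ?_
  refine Finset.sum_congr rfl fun K _ => ?_
  simp only [Finset.prod_mul_distrib, star_mul', star_prod]
  ring

lemma normsq (z : ℂ) : z * star z = ((‖z‖ ^ 2 : ℝ) : ℂ) := by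
  have := Complex.mul_conj z
  rw [Complex.normSq_eq_norm_sq] at this
  exact this

lemma sum_norm {n q : ℕ} (U : Matrix (Fin n) (Fin n) ℂ) (hU : U * star U = 1)
    (u : (Fin q → Fin n) → ℂ) : ∑ K, ‖T U u K‖ ^ 2 = ∑ I, ‖u I‖ ^ 2 := by
  have h := key U u (fun _ _ => 1)
  have e : ∀ i j, ∑ k, U i k * 1 * star (U j k) = (1 : Matrix (Fin n) (Fin n) ℂ) i j := by
    intro i j
    rw [← hU, Matrix.mul_apply]
    simp [Matrix.star_apply]
  simp only [e, prod_one] at h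
  simp only [Finset.prod_const_one, one_mul, ite_mul, zero_mul, Finset.sum_ite_eq,
    Finset.mem_univ, if_true, normsq] at h
  exact_mod_cast h

lemma norm_symm {n q : ℕ} {u : (Fin q → Fin n) → ℂ} (hu : IsCoeff u) (σ : Equiv.Perm (Fin q))
    (I : Fin q → Fin n) : ‖u (I ∘ σ)‖ = ‖u I‖ := by
  rw [hu σ I, norm_mul]
  rcases Int.units_eq_one_or (Equiv.Perm.sign σ) with h | h <;> simp [h]

lemma nSq_eq {n q : ℕ} (U : Matrix (Fin n) (Fin n) ℂ) (hU : U * star U = 1)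
    {u : (Fin q → Fin n) → ℂ} (hu : IsCoeff u) :
    (q.factorial : ℝ) * nSq u = ∑ K, ‖T U u K‖ ^ 2 := by
  rw [sum_norm U hU, nSq, sum_all (fun I => ‖u I‖ ^ 2)]
  · intro σ I; simp only [norm_symm hu]
  · intro I hI; simp [coeff_zero hu I hI]

lemma cons'_eq {n p : ℕ} (k : Fin n) (J : Fin p → Fin n) :
    cons' (p + 1) k J = Fin.cons k J := by
  funext i
  refine Fin.cases ?_ (fun j => ?_) i
  · simp [cons']
  · simp [cons']

lemma cons_comp {n p : ℕ} (k : Fin n) (J : Fin p → Fin n) (σ : Equiv.Perm (Fin p)) :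
    (Fin.cons k (J ∘ σ) : Fin (p + 1) → Fin n)
      = (Fin.cons k J : Fin (p + 1) → Fin n) ∘ (Equiv.Perm.decomposeFin.symm (0, σ)) := by
  funext i
  refine Fin.cases ?_ (fun j => ?_) i
  · simp
  · simp

lemma sum_cons {n p : ℕ} (f : (Fin (p + 1) → Fin n) → ℂ) :
    ∑ I, f I = ∑ l : Fin n, ∑ J : Fin p → Fin n, f (Fin.cons l J) := by
  rw [← (Fin.consEquiv (fun _ : Fin (p + 1) => Fin n)).sum_comp, Fintype.sum_prod_type]
  rfl

lemma mForm_eq0 {n p : ℕ} (H : Matrix (Fin n) (Fin n) ℂ) (U : Matrix (Fin n) (Fin n) ℂ)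
    (hU : U * star U = 1) (μ : Fin n → ℝ)
    (hH : ∀ l k, H l k = ∑ i, U l i * (μ i : ℂ) * star (U k i))
    {u : (Fin (p + 1) → Fin n) → ℂ} (hu : IsCoeff u) :
    (p.factorial : ℝ) * (mForm (p + 1) H u u).re = ∑ K, μ (K 0) * ‖T U u K‖ ^ 2 := by
  have e : ∀ i j, ∑ k, U i k * 1 * star (U j k) = (1 : Matrix (Fin n) (Fin n) ℂ) i j := by
    intro i j
    rw [← hU, Matrix.mul_apply]
    simp [Matrix.star_apply]
  have h := key U u (Fin.cons (fun i => (μ i : ℂ)) (fun _ _ => 1))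
  simp only [Fin.prod_univ_succ, Fin.cons_zero, Fin.cons_succ, e, ← hH] at h
  have hR : ∑ I, ∑ I', (H (I 0) (I' 0) *
      ∏ i : Fin p, (1 : Matrix (Fin n) (Fin n) ℂ) (I i.succ) (I' i.succ)) * (u I * star (u I'))
      = ∑ J : Fin p → Fin n, ∑ k, ∑ l, H l k * u (Fin.cons l J) * star (u (Fin.cons k J)) := by
    simp only [sum_cons, Fin.cons_zero, Fin.cons_succ, prod_one]
    rw [Finset.sum_comm]
    refine Finset.sum_congr rfl fun J _ => ?_
    rw [Finset.sum_comm]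
    refine Finset.sum_congr rfl fun k _ => ?_
    refine Finset.sum_congr rfl fun l _ => ?_
    simp [mul_assoc]
  rw [hR] at h
  have h' := congrArg Complex.re h
  have hA := sum_all (fun J : Fin p → Fin n =>
    (∑ k, ∑ l, H l k * u (Fin.cons l J) * star (u (Fin.cons k J))).re) ?_ ?_
  · have : (mForm (p + 1) H u u).re = ∑ J ∈ Incr n p,
        (∑ k, ∑ l, H l k * u (Fin.cons l J) * star (u (Fin.cons k J))).re := by
      unfold mForm
      rw [Complex.re_sum]
      simp only [cons'_eq]
      rfl
    rw [this, ← hA, ← Complex.re_sum, ← h', Complex.re_sum]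
    refine Finset.sum_congr rfl fun K _ => ?_
    rw [normsq]
    simp [-Complex.ofReal_pow]
  · intro σ J
    congr 1
    refine Finset.sum_congr rfl fun k _ => ?_
    refine Finset.sum_congr rfl fun l _ => ?_
    rw [cons_comp, cons_comp, hu, hu]
    generalize Equiv.Perm.sign (Equiv.Perm.decomposeFin.symm (0, σ)) = s
    rcases Int.units_eq_one_or s with h | h <;> simp [h]
  · intro J hJ
    have : ∀ l, u (Fin.cons l J) = 0 := by
      intro l
      refine coeff_zero hu _ fun hi => hJ ?_
      exact (Fin.cons_injective_iff.1 hi).2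
    simp [this]

lemma mForm_eq {n p : ℕ} (H : Matrix (Fin n) (Fin n) ℂ) (U : Matrix (Fin n) (Fin n) ℂ)
    (hU : U * star U = 1) (μ : Fin n → ℝ)
    (hH : ∀ l k, H l k = ∑ i, U l i * (μ i : ℂ) * star (U k i))
    {u : (Fin (p + 1) → Fin n) → ℂ} (hu : IsCoeff u) :
    ((p + 1).factorial : ℝ) * (mForm (p + 1) H u u).re
      = ∑ K, (∑ a, μ (K a)) * ‖T U u K‖ ^ 2 := by
  have h : ∀ a, ∑ K, μ (K a) * ‖T U u K‖ ^ 2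
      = (p.factorial : ℝ) * (mForm (p + 1) H u u).re := by
    intro a
    rw [mForm_eq0 H U hU μ hH hu]
    rw [← (Equiv.arrowCongr (Equiv.swap 0 a) (Equiv.refl (Fin n))).sum_comp]
    refine Finset.sum_congr rfl fun K _ => ?_
    have : (Equiv.arrowCongr (Equiv.swap 0 a) (Equiv.refl (Fin n))) K
        = K ∘ (Equiv.swap 0 a) := by
      funext x; simp [Equiv.arrowCongr]
    rw [this, norm_symm (T_coeff U hu)]
    simp
  simp only [Finset.sum_mul]
  rw [Finset.sum_comm]
  simp only [h]
  simp [Nat.factorial_succ]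
  ring

def alt {n q : ℕ} (s : Fin q → Fin n) : (Fin q → Fin n) → ℂ :=
  fun K => ∑ σ : Equiv.Perm (Fin q), if K = s ∘ σ then ((Equiv.Perm.sign σ : ℤ) : ℂ) else 0

lemma alt_coeff {n q : ℕ} (s : Fin q → Fin n) : IsCoeff (alt s) := by
  intro τ K
  unfold alt
  rw [Finset.mul_sum, ← Equiv.sum_comp (Equiv.mulRight τ)]
  refine Finset.sum_congr rfl fun σ _ => ?_
  have : (K ∘ τ = s ∘ ((Equiv.mulRight τ) σ)) ↔ K = s ∘ σ := by
    simp only [Equiv.coe_mulRight, Equiv.Perm.coe_mul, ← Function.comp_assoc]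
    exact τ.surjective.injective_comp_right.eq_iff
  simp only [this]
  split_ifs
  · simp; ring
  · simp

lemma alt_self {n q : ℕ} (s : Fin q → Fin n) (hs : Function.Injective s) : alt s s = 1 := by
  unfold alt
  rw [Finset.sum_eq_single 1]
  · simp
  · intro σ _ hσ
    rw [if_neg]
    intro h
    apply hσ
    ext x
    have := hs (congrFun h x)
    simp [← this]
  · simp

lemma alt_ne {n q : ℕ} (s K : Fin q → Fin n) (h : alt s K ≠ 0) :
    ∃ σ : Equiv.Perm (Fin q), K = s ∘ σ := by
  by_contra hc
  push Not at hc
  exact h (by unfold alt; simp [hc])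

end HMaux

/-- For a Hermitian `n×n` matrix `H` and `C ∈ ℝ`, the inequality
`H(u,u) ≥ C·|u|²` for all (0,q)-coefficient systems `u` is equivalent to the sum of the
eigenvalues of `H` over any `q`-element index set being at least `C`. -/
theorem eigenvalue_sum_iff_hessian_bound (n q : ℕ) (hn : 1 ≤ n) (hq1 : 1 ≤ q) (hqn : q ≤ n)
    (H : Matrix (Fin n) (Fin n) ℂ) (hH : H.IsHermitian) (C : ℝ) :
    (∀ u : (Fin q → Fin n) → ℂ, HM.IsCoeff u →
        C * HM.nSq u ≤ (HM.mForm q H u u).re) ↔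
      (∀ S : Finset (Fin n), S.card = q → C ≤ ∑ i ∈ S, hH.eigenvalues i) := by
  obtain ⟨p, rfl⟩ : ∃ p, q = p + 1 := ⟨q - 1, by omega⟩
  set U : Matrix (Fin n) (Fin n) ℂ := (hH.eigenvectorUnitary : Matrix (Fin n) (Fin n) ℂ) with hUd
  have hU : U * star U = 1 := Matrix.mem_unitaryGroup_iff.1 hH.eigenvectorUnitary.2
  have hU' : star U * U = 1 := Matrix.mem_unitaryGroup_iff'.1 hH.eigenvectorUnitary.2
  set μ := hH.eigenvalues with hμ
  have hspec : ∀ l k, H l k = ∑ i, U l i * (μ i : ℂ) * star (U k i) := by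
    intro l k
    have h := hH.spectral_theorem
    rw [Unitary.conjStarAlgAut_apply] at h
    have h2 := congrFun (congrFun h l) k
    rw [h2, Matrix.mul_apply]
    refine Finset.sum_congr rfl fun i _ => ?_
    rw [Matrix.mul_diagonal]
    rfl
  have hf : (0 : ℝ) < ((p + 1).factorial : ℝ) := by exact_mod_cast Nat.factorial_pos _
  constructor
  · intro h S hS
    set s : Fin (p + 1) → Fin n := ⇑(S.orderEmbOfFin hS) with hs
    have hsi : Function.Injective s := (S.orderEmbOfFin hS).injective
    have hw := HMaux.alt_coeff s
    set u := HMaux.T (star U) (HMaux.alt s) with hu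
    have huc : HM.IsCoeff u := HMaux.T_coeff _ hw
    have hT : HMaux.T U u = HMaux.alt s := HMaux.T_T _ _ hU' _
    have h1 := h u huc
    have h2 := HMaux.nSq_eq U hU huc
    have h3 := HMaux.mForm_eq H U hU μ hspec huc
    rw [hT] at h2 h3
    have hsum : ∑ a, μ (s a) = ∑ i ∈ S, μ i := by
      rw [← Finset.sum_image (f := μ) (s := Finset.univ) (g := s) (fun a _ b _ hab => hsi hab)]
      congr 1
      apply Finset.coe_injective
      simp [hs]
    have h4 : ∑ K, (∑ a, μ (K a)) * ‖HMaux.alt s K‖ ^ 2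
        = (∑ i ∈ S, μ i) * ∑ K, ‖HMaux.alt s K‖ ^ 2 := by
      rw [Finset.mul_sum]
      refine Finset.sum_congr rfl fun K _ => ?_
      by_cases hK : HMaux.alt s K = 0
      · simp [hK]
      · obtain ⟨σ, rfl⟩ := HMaux.alt_ne s K hK
        rw [← hsum]
        congr 1
        exact Equiv.sum_comp σ (fun a => μ (s a))
    have hpos : 0 < ∑ K, ‖HMaux.alt s K‖ ^ 2 := by
      refine lt_of_lt_of_le ?_ (Finset.single_le_sum (f := fun K => ‖HMaux.alt s K‖ ^ 2)
        (fun K _ => sq_nonneg _) (Finset.mem_univ s))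
      simp [HMaux.alt_self s hsi]
    have h5 := mul_le_mul_of_nonneg_left h1 hf.le
    rw [h3, h4, mul_left_comm, h2] at h5
    exact le_of_mul_le_mul_right h5 hpos
  · intro h u hu
    refine le_of_mul_le_mul_left ?_ hf
    rw [mul_left_comm, HMaux.nSq_eq U hU hu, HMaux.mForm_eq H U hU μ hspec hu, Finset.mul_sum]
    refine Finset.sum_le_sum fun K _ => ?_
    by_cases hK : Function.Injective K
    · refine mul_le_mul_of_nonneg_right ?_ (sq_nonneg _)
      have := h (Finset.univ.image K) (by rw [Finset.card_image_of_injective _ hK]; simp)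
      rwa [Finset.sum_image (fun a _ b _ hab => hK hab)] at this
    · simp [HMaux.coeff_zero (HMaux.T_coeff U hu) K hK]
end

section
/- Let n ≥ 1, 1 ≤ q ≤ n, let Ω ⊆ ℂⁿ be a bounded open set and D > 0 a constant with |z|² ≤ D for all z in the closure of Ω. Let ρ be a real-valued C² function on an open neighborhood of the closure of Ω with ρ < 0 on Ω, and assume that i∂∂̄ρ(u,u)(z) ≥ 0 for every z in the closure of Ω and every (0,q)-coefficient system u. Fix s ∈ (0,1), set K := (1−s)/(2Dns) and r(z) := e^{−K|z|²} ρ(z). Then for every z ∈ Ω and every (0,q)-coefficient system u: i∂∂̄(−(−r)^s)(u,u)(z) ≥ ((1−s)q/(4Dn)) · (−r(z))^s · |u|². -/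
open scoped BigOperators
open MeasureTheory

namespace HM

lemma cons'_succ {n p : ℕ} (k : Fin n) (J : Fin p → Fin n) :
    cons' (p+1) k J = (Fin.cons k J : Fin (p+1) → Fin n) := by
  funext i
  refine Fin.cases ?_ (fun j => ?_) i
  · simp [cons']
  · simp [cons']

lemma sum_all {n p : ℕ} (F : (Fin p → Fin n) → ℝ)
    (hF : ∀ (σ : Equiv.Perm (Fin p)) I, F (I ∘ σ) = F I)
    (h0 : ∀ I, ¬ Function.Injective I → F I = 0) :
    ∑ I, F I = (p.factorial : ℝ) * ∑ I ∈ Incr n p, F I := by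
  have h1 : ∑ I ∈ Finset.univ.filter (fun I : Fin p → Fin n => Function.Injective I), F I
      = ∑ I, F I := by
    apply Finset.sum_subset (Finset.subset_univ _)
    intro I _ hI
    exact h0 I (by simpa using hI)
  have h2 : (p.factorial : ℝ) * ∑ I ∈ Incr n p, F I
      = ∑ x ∈ Incr n p ×ˢ (Finset.univ : Finset (Equiv.Perm (Fin p))), F (x.1 ∘ x.2) := by
    rw [Finset.sum_product]
    simp only [hF, Finset.sum_const, Finset.card_univ, Fintype.card_perm, Fintype.card_fin,
      nsmul_eq_mul]
    rw [Finset.mul_sum]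
  rw [h2, ← h1]
  symm
  have hm : ∀ I : Fin p → Fin n, I ∈ Incr n p ↔ StrictMono I := by
    intro I
    simp only [Incr, Finset.mem_filter, Finset.mem_univ, true_and]
    exact ⟨fun h a b hab => h a b hab, fun h a b hab => h hab⟩
  apply Finset.sum_nbij (fun x => x.1 ∘ x.2)
  · rintro ⟨I, σ⟩ hI
    simp only [Finset.mem_product, hm, Finset.mem_univ, and_true, Finset.mem_filter, true_and] at hI ⊢
    exact hI.injective.comp σ.injective
  · rintro ⟨I, σ⟩ hI ⟨I', σ'⟩ hI' h
    simp only [Finset.coe_product, Set.mem_prod, Finset.mem_coe, hm, Finset.mem_univ, and_true] at hI hI'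
    simp only at h
    have hr : I = I' := by
      apply (StrictMono.range_inj hI hI').1
      rw [← σ.surjective.range_comp I, h, σ'.surjective.range_comp]
    subst hr
    have : σ = σ' := by
      ext1 i
      exact hI.injective (congrFun h i)
    rw [this]
  · intro I hI
    have hI : Function.Injective I := by simpa using hI
    refine ⟨(I ∘ Tuple.sort I, (Tuple.sort I)⁻¹), ?_, ?_⟩
    · simp only [Finset.coe_product, Set.mem_prod, Finset.mem_coe, hm, Finset.mem_univ, and_true]
      exact (Tuple.monotone_sort I).strictMono_of_injective (hI.comp (Tuple.sort I).injective)
    · funext i; simp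
  · intros; rfl

lemma IsCoeff.sq {n q : ℕ} {u : (Fin q → Fin n) → ℂ} (hu : IsCoeff u)
    (σ : Equiv.Perm (Fin q)) (I) : ‖u (I ∘ σ)‖ ^ 2 = ‖u I‖ ^ 2 := by
  rw [hu σ I]
  rcases Int.units_eq_one_or (Equiv.Perm.sign σ) with h | h <;> simp [h]

lemma IsCoeff.zero {n q : ℕ} {u : (Fin q → Fin n) → ℂ} (hu : IsCoeff u)
    (I) (hI : ¬ Function.Injective I) : u I = 0 := by
  simp only [Function.Injective, not_forall] at hI
  obtain ⟨a, b, hab, hne⟩ := hI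
  have h := hu (Equiv.swap a b) I
  have : I ∘ Equiv.swap a b = I := by
    funext i
    simp only [Function.comp, Equiv.swap_apply_def]
    split_ifs with h1 h2
    · rw [h1, hab]
    · rw [h2, hab]
    · rfl
  rw [this, Equiv.Perm.sign_swap hne] at h
  simp at h
  have h2 : (2:ℂ) * u I = 0 := by linear_combination h
  simpa using h2

lemma sum_cons_eq {n q : ℕ} (hq : 1 ≤ q) {u : (Fin q → Fin n) → ℂ} (hu : IsCoeff u) :
    ∑ J ∈ Incr n (q - 1), ∑ l : Fin n, ‖u (cons' q l J)‖ ^ 2 = q * nSq u := by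
  obtain ⟨p, rfl⟩ : ∃ p, q = p + 1 := ⟨q - 1, by omega⟩
  have hA := sum_all (fun I => ‖u I‖ ^ 2) (fun σ I => hu.sq σ I)
    (fun I hI => by simp [hu.zero I hI])
  have hB : ∀ l : Fin n, ∑ J : Fin p → Fin n, ‖u (Fin.cons l J : Fin (p+1) → Fin n)‖ ^ 2
      = (p.factorial : ℝ) * ∑ J ∈ Incr n p, ‖u (Fin.cons l J : Fin (p+1) → Fin n)‖ ^ 2 := by
    intro l
    refine sum_all (fun J => ‖u (Fin.cons l J : Fin (p+1) → Fin n)‖ ^ 2) ?_ ?_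
    · intro σ J
      have := hu.sq (Equiv.Perm.decomposeFin.symm (0, σ)) (Fin.cons l J : Fin (p+1) → Fin n)
      rw [← this]
      congr 3
      funext i
      refine Fin.cases ?_ (fun j => ?_) i
      · simp
      · simp
    · intro J hJ
      have := hu.zero (Fin.cons l J : Fin (p+1) → Fin n) (fun h => hJ (by
        rw [Fin.cons_injective_iff] at h; exact h.2))
      simp [this]
  have hC : ∑ I : Fin (p+1) → Fin n, ‖u I‖ ^ 2
      = ∑ l : Fin n, ∑ J : Fin p → Fin n, ‖u (Fin.cons l J : Fin (p+1) → Fin n)‖ ^ 2 := by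
    rw [← (Fin.consEquiv (fun _ : Fin (p+1) => Fin n)).sum_comp, Fintype.sum_prod_type]
    rfl
  simp only [cons'_succ]
  change ∑ J ∈ Incr n p, ∑ l : Fin n, ‖u (Fin.cons l J : Fin (p+1) → Fin n)‖ ^ 2 = _
  rw [Finset.sum_comm]
  simp only [hB] at hC
  rw [← Finset.mul_sum, hA, Nat.factorial_succ] at hC
  have hp : (p.factorial : ℝ) ≠ 0 := by positivity
  apply mul_left_cancel₀ hp
  simp only [nSq]
  push_cast at hC ⊢
  linear_combination -hC

/-- generic Wirtinger operator -/
noncomputable def W {n : ℕ} (c : ℂ) (f : (Fin n → ℂ) → ℂ) (k : Fin n) (z : Fin n → ℂ) : ℂ :=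
  (1/2 : ℂ) * (fderiv ℝ f z (Pi.single k 1) + c * fderiv ℝ f z (Pi.single k Complex.I))

lemma dz_eq {n : ℕ} (f : (Fin n → ℂ) → ℂ) (k z) : dz f k z = W (-Complex.I) f k z := by
  simp only [dz, W]; ring
lemma dzbar_eq {n : ℕ} (f : (Fin n → ℂ) → ℂ) (k z) : dzbar f k z = W Complex.I f k z := rfl

variable {n : ℕ}

lemma W_mul (c : ℂ) {f g : (Fin n → ℂ) → ℂ} (k) {z} (hf : DifferentiableAt ℝ f z)
    (hg : DifferentiableAt ℝ g z) :
    W c (fun w => f w * g w) k z = W c f k z * g z + f z * W c g k z := by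
  simp only [W]
  rw [fderiv_fun_mul hf hg]
  simp
  ring

lemma W_add (c : ℂ) {f g : (Fin n → ℂ) → ℂ} (k) {z} (hf : DifferentiableAt ℝ f z)
    (hg : DifferentiableAt ℝ g z) :
    W c (fun w => f w + g w) k z = W c f k z + W c g k z := by
  simp only [W]
  rw [fderiv_fun_add hf hg]
  simp
  ring

lemma W_const_mul (c a : ℂ) {f : (Fin n → ℂ) → ℂ} (k) {z} (hf : DifferentiableAt ℝ f z) :
    W c (fun w => a * f w) k z = a * W c f k z := by
  simp only [W]
  rw [fderiv_const_mul hf]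
  simp
  ring

lemma W_congr (c : ℂ) {f g : (Fin n → ℂ) → ℂ} (k) {z} (h : f =ᶠ[nhds z] g) :
    W c f k z = W c g k z := by
  simp only [W, h.fderiv_eq]

lemma fderiv_ofReal {f : (Fin n → ℂ) → ℝ} {z} (hf : DifferentiableAt ℝ f z) (v) :
    fderiv ℝ (fun y => (f y : ℂ)) z v = (fderiv ℝ f z v : ℂ) := by
  have := (Complex.ofRealCLM.hasFDerivAt (x := f z)).comp z hf.hasFDerivAt
  rw [show (fun y => (f y : ℂ)) = Complex.ofRealCLM ∘ f from rfl, this.fderiv]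
  simp

lemma diff_ofReal {f : (Fin n → ℂ) → ℝ} {z} (hf : DifferentiableAt ℝ f z) :
    DifferentiableAt ℝ (fun y => (f y : ℂ)) z :=
  (Complex.ofRealCLM.differentiableAt (x := f z)).comp z hf

lemma W_chain (c : ℂ) {f : (Fin n → ℂ) → ℝ} {F : ℝ → ℝ} {F' : ℝ} (k) {z}
    (hf : DifferentiableAt ℝ f z) (hF : HasDerivAt F F' (f z)) :
    W c (fun w => (F (f w) : ℂ)) k z = (F' : ℂ) * W c (fun w => (f w : ℂ)) k z := by
  have h := hF.comp_hasFDerivAt z hf.hasFDerivAt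
  have hd : DifferentiableAt ℝ (fun w => F (f w)) z := h.differentiableAt
  have h' : fderiv ℝ (fun w => F (f w)) z = F' • fderiv ℝ f z := h.fderiv
  simp only [W]
  rw [fderiv_ofReal hd, fderiv_ofReal hd, fderiv_ofReal hf, fderiv_ofReal hf, h']
  simp
  ring

lemma W_conj {f : (Fin n → ℂ) → ℝ} (k) {z} (hf : DifferentiableAt ℝ f z) :
    W (-Complex.I) (fun w => (f w : ℂ)) k z
      = star (W Complex.I (fun w => (f w : ℂ)) k z) := by
  simp only [W]
  rw [fderiv_ofReal hf, fderiv_ofReal hf]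
  simp

lemma diff_W (c : ℂ) {f : (Fin n → ℂ) → ℝ} (k) {z} (hf : ContDiffAt ℝ 2 f z) :
    DifferentiableAt ℝ (fun w => W c (fun y => (f y : ℂ)) k w) z := by
  have h1 : ContDiffAt ℝ 2 (fun y => (f y : ℂ)) z :=
    Complex.ofRealCLM.contDiff.contDiffAt.comp z hf
  have h2 : DifferentiableAt ℝ (fderiv ℝ (fun y => (f y : ℂ))) z :=
    (h1.fderiv_right (m := 1) (by norm_num)).differentiableAt (by norm_num)
  simp only [W]
  fun_prop

lemma ev_diff {f : (Fin n → ℂ) → ℝ} {z} (hf : ContDiffAt ℝ 2 f z) :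
    ∀ᶠ w in nhds z, DifferentiableAt ℝ f w := by
  filter_upwards [hf.eventually (by simp)] with w hw
  exact hw.differentiableAt (by norm_num)

/-- squared norm -/
noncomputable def phi (z : Fin n → ℂ) : ℝ := ∑ k : Fin n, ‖z k‖ ^ 2

lemma phi_smooth : ContDiff ℝ 2 (phi (n := n)) := by
  unfold phi
  apply ContDiff.sum
  intro i _
  exact (contDiff_apply ℝ ℂ i).norm_sq ℝ

lemma W_phi (k) (z : Fin n → ℂ) : W Complex.I (fun w => (phi w : ℂ)) k z = z k := by
  have hd : ∀ z, DifferentiableAt ℝ (phi (n := n)) z := fun z =>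
    phi_smooth.contDiffAt.differentiableAt (by norm_num)
  have hj : ∀ j, HasFDerivAt (fun w : Fin n → ℂ => ‖w j‖ ^ 2)
      ((2 • (innerSL ℝ (z j))).comp (ContinuousLinearMap.proj (R := ℝ) (φ := fun _ : Fin n => ℂ) j)) z := by
    intro j
    exact ((hasStrictFDerivAt_norm_sq (z j)).hasFDerivAt).comp z
      (ContinuousLinearMap.proj (R := ℝ) (φ := fun _ : Fin n => ℂ) j).hasFDerivAt
  have h := HasFDerivAt.fun_sum (u := Finset.univ) (fun j _ => hj j)
  have h' : fderiv ℝ (phi (n := n)) z = _ := h.fderiv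
  have hv : ∀ a : ℂ, fderiv ℝ (phi (n := n)) z (Pi.single k a) = 2 * inner ℝ (z k) a := by
    intro a
    rw [h']
    simp only [_root_.sum_apply, ContinuousLinearMap.comp_apply,
      ContinuousLinearMap.proj_apply, _root_.smul_apply, innerSL_apply_apply]
    rw [Finset.sum_eq_single k]
    · simp; try ring
    · intro b _ hb
      simp [Pi.single_eq_of_ne hb]
    · simp
  simp only [W]
  rw [fderiv_ofReal (hd z), fderiv_ofReal (hd z), hv, hv]
  apply Complex.ext <;> simp [Complex.inner]

lemma W_coord (l k) (z : Fin n → ℂ) :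
    W (-Complex.I) (fun w : Fin n → ℂ => w k) l z = if l = k then 1 else 0 := by
  have : fderiv ℝ (fun w : Fin n → ℂ => w k) z =
    (ContinuousLinearMap.proj (R := ℝ) (φ := fun _ : Fin n => ℂ) k) :=
    (ContinuousLinearMap.proj (R := ℝ) (φ := fun _ : Fin n => ℂ) k).hasFDerivAt.fderiv
  simp only [W, this, ContinuousLinearMap.proj_apply, Pi.single_apply]
  by_cases h : l = k
  · subst h; simp; norm_num
  · simp [h, Ne.symm h]

lemma hess_key {ρ : (Fin n → ℂ) → ℝ} {z : Fin n → ℂ} (hρ : ContDiffAt ℝ 2 ρ z) (hz : ρ z < 0)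
    (s K : ℝ) (l k : Fin n) :
    hessW (fun w => -((-(Real.exp (-K * phi w) * ρ w)) ^ s)) l k z =
      (((-(Real.exp (-K * phi z) * ρ z)) ^ s : ℝ) : ℂ) *
      ((s * K : ℂ) * (if l = k then 1 else 0)
        + (s * (-(ρ z)⁻¹) : ℂ) * hessW ρ l k z
        + s * (((ρ z : ℂ)⁻¹ * dz (fun w => (ρ w : ℂ)) l z)
          * star ((ρ z : ℂ)⁻¹ * dz (fun w => (ρ w : ℂ)) k z))
        - (s:ℂ)^2 * (((ρ z : ℂ)⁻¹ * dz (fun w => (ρ w : ℂ)) l z - K * star (z l))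
          * star ((ρ z : ℂ)⁻¹ * dz (fun w => (ρ w : ℂ)) k z - K * star (z k)))) := by
  set h : (Fin n → ℂ) → ℝ := fun w => -(s * K) * phi w + s * Real.log (-ρ w) with hh
  have hneg : ∀ᶠ w in nhds z, ρ w < 0 := hρ.continuousAt.eventually (gt_mem_nhds hz)
  have hpow : ∀ w, ρ w < 0 → (-(Real.exp (-K * phi w) * ρ w)) ^ s = Real.exp (h w) := by
    intro w hw
    rw [show -(Real.exp (-K * phi w) * ρ w) = Real.exp (-K * phi w) * (-ρ w) by ring,
      Real.mul_rpow (Real.exp_pos _).le (by linarith), Real.rpow_def_of_pos (by linarith : 0 < -ρ w),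
      ← Real.exp_mul, ← Real.exp_add]
    congr 1
    simp only [hh]; ring
  have hphi : ∀ w, DifferentiableAt ℝ (phi (n := n)) w := fun z =>
    phi_smooth.contDiffAt.differentiableAt (by norm_num)
  have hlog : ∀ w, ρ w < 0 → DifferentiableAt ℝ ρ w → DifferentiableAt ℝ (fun w => Real.log (-ρ w)) w :=
    fun w hw hd => hd.neg.log (by simp; linarith)
  have hhd : ∀ w, ρ w < 0 → DifferentiableAt ℝ ρ w → DifferentiableAt ℝ h w := by
    intro w hw hd
    exact ((hphi w).const_mul _).add ((hlog w hw hd).const_mul _)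
  -- first derivative of h
  have hW : ∀ c k w, ρ w < 0 → DifferentiableAt ℝ ρ w →
      W c (fun w => (h w : ℂ)) k w = -(s * K : ℂ) * W c (fun w => (phi w : ℂ)) k w
        + s * ((ρ w : ℂ)⁻¹ * W c (fun w => (ρ w : ℂ)) k w) := by
    intro c k w hw hd
    have e1 : (fun w => (h w : ℂ)) = fun w => (-(s * K : ℂ)) * (phi w : ℂ)
        + (s : ℂ) * ((Real.log (-ρ w) : ℝ) : ℂ) := by
      funext w; simp only [hh]; push_cast; ring
    have d1 := diff_ofReal (hphi w)
    have d2 := diff_ofReal (hlog w hw hd)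
    rw [e1, W_add c k (d1.const_mul _) (d2.const_mul _), W_const_mul _ _ _ d1,
      W_const_mul _ _ _ d2]
    have hF : HasDerivAt (fun x : ℝ => Real.log (-x)) ((ρ w)⁻¹) (ρ w) := by
      have := (Real.hasDerivAt_log hw.ne)
      simpa [Real.log_neg_eq_log] using this
    rw [W_chain (F := fun x => Real.log (-x)) c k hd hF]
    push_cast; rfl
  have hρz : DifferentiableAt ℝ ρ z := hρ.differentiableAt (by norm_num)
  have hne : (ρ z : ℂ) ≠ 0 := by exact_mod_cast hz.ne
  -- dzbar of g near z
  have hg : (fun w => dzbar (fun y => ((-((-(Real.exp (-K * phi y) * ρ y)) ^ s) : ℝ) : ℂ)) k w)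
      =ᶠ[nhds z] fun w => ((-Real.exp (h w) : ℝ) : ℂ) *
        (-(s * K : ℂ) * w k + s * (((ρ w)⁻¹ : ℝ) * W Complex.I (fun w => (ρ w : ℂ)) k w)) := by
    filter_upwards [hneg.eventually_nhds, hneg, ev_diff hρ] with w hw1 hw2 hw3
    rw [dzbar_eq]
    have : (fun y => ((-((-(Real.exp (-K * phi y) * ρ y)) ^ s) : ℝ) : ℂ)) =ᶠ[nhds w]
        fun y => ((-Real.exp (h y) : ℝ) : ℂ) := by
      filter_upwards [hw1] with y hy
      rw [hpow y hy]
    rw [W_congr _ _ this, W_chain (F := fun x => -Real.exp x) _ k (hhd w hw2 hw3)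
      (Real.hasDerivAt_exp _).neg, hW _ _ _ hw2 hw3, W_phi]
    push_cast; rfl
  have dexp : DifferentiableAt ℝ (fun w => ((-Real.exp (h w) : ℝ) : ℂ)) z :=
    diff_ofReal ((hhd z hz hρz).exp.neg)
  have dco : DifferentiableAt ℝ (fun w : Fin n → ℂ => w k) z := by fun_prop
  have dinv : DifferentiableAt ℝ (fun w => (((ρ w)⁻¹ : ℝ) : ℂ)) z :=
    diff_ofReal (hρz.inv hz.ne)
  have dWρ := diff_W Complex.I k hρ
  have dm : DifferentiableAt ℝ (fun w => (((ρ w)⁻¹ : ℝ) : ℂ) *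
      W Complex.I (fun w => (ρ w : ℂ)) k w) z := dinv.mul dWρ
  have dsum : DifferentiableAt ℝ (fun w => -(s * K : ℂ) * w k + s * ((((ρ w)⁻¹ : ℝ) : ℂ) *
      W Complex.I (fun w => (ρ w : ℂ)) k w)) z := (dco.const_mul _).add (dm.const_mul _)
  rw [hessW, dz_eq, W_congr _ _ hg, W_mul _ _ dexp dsum,
    W_add _ _ (dco.const_mul _) (dm.const_mul _), W_const_mul _ _ _ dco, W_const_mul _ _ _ dm,
    W_coord, W_mul _ _ dinv dWρ]
  rw [W_chain (F := fun x => -Real.exp x) _ l (hhd z hz hρz) (Real.hasDerivAt_exp _).neg,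
    W_chain (F := fun x => x⁻¹) _ l hρz (hasDerivAt_inv hz.ne), hW _ _ _ hz hρz,
    W_conj l (hphi z), W_phi, hpow z hz]
  simp only [hessW, dz_eq, dzbar_eq, W_conj _ hρz]
  simp only [star_sub, star_mul', star_inv₀, RCLike.star_def, Complex.conj_ofReal, Complex.conj_conj]
  push_cast
  field_simp
  ring

lemma quad_ineq (s K : ℝ) (hs0 : 0 < s) (hs1 : s < 1) (A B : ℂ) :
    -(s ^ 2 * K ^ 2 / (1 - s)) * ‖B‖ ^ 2 ≤ s * ‖A‖ ^ 2 - s ^ 2 * ‖A - K * B‖ ^ 2 := by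
  have h1 : 0 < 1 - s := by linarith
  rw [neg_mul, div_mul_eq_mul_div, ← neg_div, div_le_iff₀ h1]
  simp only [← Complex.normSq_eq_norm_sq, Complex.normSq_apply, Complex.sub_re, Complex.sub_im,
    Complex.re_ofReal_mul, Complex.im_ofReal_mul]
  nlinarith [mul_nonneg hs0.le (sq_nonneg ((1 - s) * A.re + s * K * B.re)),
    mul_nonneg hs0.le (sq_nonneg ((1 - s) * A.im + s * K * B.im))]

lemma cs (z v : Fin n → ℂ) : ‖∑ l, star (z l) * v l‖ ^ 2 ≤ phi z * ∑ l, ‖v l‖ ^ 2 := by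
  calc ‖∑ l, star (z l) * v l‖ ^ 2 ≤ (∑ l, ‖z l‖ * ‖v l‖) ^ 2 := by
        gcongr
        refine (norm_sum_le _ _).trans_eq ?_
        simp
    _ ≤ _ := Finset.sum_mul_sq_le_sq_mul_sq _ _ _

lemma sum_rank1 (a v : Fin n → ℂ) :
    ∑ k, ∑ l, a l * star (a k) * v l * star (v k) = ((‖∑ l, a l * v l‖ ^ 2 : ℝ) : ℂ) := by
  rw [← Complex.normSq_eq_norm_sq, ← Complex.mul_conj, map_sum, Finset.sum_mul_sum,
    Finset.sum_comm]
  refine Finset.sum_congr rfl fun l _ => Finset.sum_congr rfl fun k _ => ?_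
  simp; ring

lemma sum_delta (v : Fin n → ℂ) :
    ∑ k, ∑ l, (if l = k then (1:ℂ) else 0) * v l * star (v k) = ((∑ l, ‖v l‖ ^ 2 : ℝ) : ℂ) := by
  push_cast
  refine Finset.sum_congr rfl fun k _ => ?_
  simp [Complex.mul_conj, Complex.normSq_eq_norm_sq]

end HM

/-- the Diederich–Fornæss type lemma (Lemma 3.2): with
`K = (1−s)/(2Dns)` and `r = e^{−K|z|²}ρ`, one has
`i∂∂̄(−(−r)^s)(u,u) ≥ ((1−s)q/(4Dn))·(−r)^s·|u|²` on `Ω`. -/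
theorem diederich_fornaess_bound (n q : ℕ) (hn : 1 ≤ n) (hq1 : 1 ≤ q) (hqn : q ≤ n)
    (Ω U : Set (Fin n → ℂ)) (hΩo : IsOpen Ω) (hΩb : Bornology.IsBounded Ω)
    (D : ℝ) (hD : 0 < D) (hDbound : ∀ z ∈ closure Ω, ∑ k : Fin n, ‖z k‖ ^ 2 ≤ D)
    (hU : IsOpen U) (hcl : closure Ω ⊆ U)
    (ρ : (Fin n → ℂ) → ℝ) (hρ : ContDiffOn ℝ 2 ρ U)
    (hρneg : ∀ z ∈ Ω, ρ z < 0)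
    (hρpsh : ∀ z ∈ closure Ω, ∀ u : (Fin q → Fin n) → ℂ, HM.IsCoeff u →
      0 ≤ (HM.hForm q ρ u z).re)
    (s : ℝ) (hs : s ∈ Set.Ioo (0 : ℝ) 1)
    (K : ℝ) (hK : K = (1 - s) / (2 * D * n * s))
    (r : (Fin n → ℂ) → ℝ)
    (hr : ∀ z, r z = Real.exp (-K * ∑ k : Fin n, ‖z k‖ ^ 2) * ρ z) :
    ∀ z ∈ Ω, ∀ u : (Fin q → Fin n) → ℂ, HM.IsCoeff u →
      ((1 - s) * q / (4 * D * n)) * (-(r z)) ^ s * HM.nSq u ≤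
        (HM.hForm q (fun w => -((-(r w)) ^ s)) u z).re := by
  intro z hz u hu
  have hphi : r = fun w => Real.exp (-K * HM.phi w) * ρ w := by
    funext w; exact hr w
  have hzc : z ∈ closure Ω := subset_closure hz
  have hρz : ContDiffAt ℝ 2 ρ z := hρ.contDiffAt (hU.mem_nhds (hcl hzc))
  have hneg := hρneg z hz
  obtain ⟨hs0, hs1⟩ := hs
  have hn' : (1:ℝ) ≤ n := by exact_mod_cast hn
  have hpsh := hρpsh z hzc u hu
  have hsum := HM.sum_cons_eq hq1 hu
  subst hphi
  set G : ℝ := (-(Real.exp (-K * HM.phi z) * ρ z)) ^ s with hG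
  have hG0 : 0 ≤ G := by
    apply Real.rpow_nonneg
    nlinarith [Real.exp_pos (-K * HM.phi z)]
  set a : Fin n → ℂ := fun l => (ρ z : ℂ)⁻¹ * HM.dz (fun w => (ρ w : ℂ)) l z with ha
  set b : Fin n → ℂ := fun l => a l - K * star (z l) with hb
  have key : HM.hForm q (fun w => -((-(Real.exp (-K * HM.phi w) * ρ w)) ^ s)) u z
      = (G : ℂ) * ((s * K : ℝ) * ((∑ J ∈ HM.Incr n (q - 1), ∑ l, ‖u (HM.cons' q l J)‖ ^ 2 : ℝ) : ℂ)
        + (s * (-(ρ z)⁻¹) : ℝ) * HM.hForm q ρ u z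
        + ((∑ J ∈ HM.Incr n (q - 1), (s * ‖∑ l, a l * u (HM.cons' q l J)‖ ^ 2
          - s ^ 2 * ‖∑ l, b l * u (HM.cons' q l J)‖ ^ 2) : ℝ) : ℂ)) := by
    rw [Complex.ofReal_sum, Complex.ofReal_sum]
    simp only [HM.hForm, Finset.mul_sum _ _ ((s * (-(ρ z)⁻¹) : ℝ) : ℂ)]
    rw [Finset.mul_sum, ← Finset.sum_add_distrib, ← Finset.sum_add_distrib, Finset.mul_sum]
    refine Finset.sum_congr rfl fun J _ => ?_
    rw [← HM.sum_delta (fun l => u (HM.cons' q l J)), Complex.ofReal_sub, Complex.ofReal_mul s (_ ^ 2),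
      Complex.ofReal_mul (s ^ 2),
      ← HM.sum_rank1 a (fun l => u (HM.cons' q l J)),
      ← HM.sum_rank1 b (fun l => u (HM.cons' q l J))]
    simp only [Finset.mul_sum, ← Finset.sum_add_distrib, ← Finset.sum_sub_distrib]
    refine Finset.sum_congr rfl fun k _ => Finset.sum_congr rfl fun l _ => ?_
    rw [HM.hess_key hρz hneg]
    simp only [hb, ha, ← hG]
    push_cast
    ring
  have hre : (HM.hForm q (fun w => -((-(Real.exp (-K * HM.phi w) * ρ w)) ^ s)) u z).re
      = G * (s * K * (q * HM.nSq u) + s * (-(ρ z)⁻¹) * (HM.hForm q ρ u z).re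
        + ∑ J ∈ HM.Incr n (q - 1), (s * ‖∑ l, a l * u (HM.cons' q l J)‖ ^ 2
          - s ^ 2 * ‖∑ l, b l * u (HM.cons' q l J)‖ ^ 2)) := by
    rw [key, hsum]
    simp only [Complex.re_ofReal_mul, Complex.add_re, Complex.ofReal_re]
  have hN : 0 ≤ HM.nSq u := Finset.sum_nonneg fun I _ => by positivity
  have h1s : 0 < 1 - s := by linarith
  have hlow : -(s ^ 2 * K ^ 2 / (1 - s)) * (D * (q * HM.nSq u)) ≤
      ∑ J ∈ HM.Incr n (q - 1), (s * ‖∑ l, a l * u (HM.cons' q l J)‖ ^ 2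
          - s ^ 2 * ‖∑ l, b l * u (HM.cons' q l J)‖ ^ 2) := by
    rw [← hsum, Finset.mul_sum, Finset.mul_sum]
    refine Finset.sum_le_sum fun J _ => ?_
    have e : ∑ l, b l * u (HM.cons' q l J) = ∑ l, a l * u (HM.cons' q l J)
        - K * ∑ l, star (z l) * u (HM.cons' q l J) := by
      rw [Finset.mul_sum, ← Finset.sum_sub_distrib]
      refine Finset.sum_congr rfl fun l _ => ?_
      simp only [hb]; ring
    rw [e]
    refine le_trans ?_ (HM.quad_ineq s K hs0 hs1 _ _)
    have hc := HM.cs z (fun l => u (HM.cons' q l J))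
    have hd : HM.phi z ≤ D := hDbound z hzc
    have hc2 := hc.trans (mul_le_mul_of_nonneg_right hd
      (Finset.sum_nonneg fun l _ => by positivity))
    rw [neg_mul, neg_mul, neg_le_neg_iff]
    exact mul_le_mul_of_nonneg_left hc2 (by positivity)
  have hmid : 0 ≤ s * (-(ρ z)⁻¹) * (HM.hForm q ρ u z).re := by
    have : 0 ≤ -(ρ z)⁻¹ := by simpa using hneg.le
    positivity
  have hcoef : (1 - s) / (4 * D * n) ≤ s * K - s ^ 2 * K ^ 2 / (1 - s) * D := by
    have : s * K - s ^ 2 * K ^ 2 / (1 - s) * D - (1 - s) / (4 * D * n)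
        = (1 - s) / (4 * D * n) * (1 - 1 / n) := by
      rw [hK]; field_simp; ring
    have h2 : 0 ≤ 1 - 1 / (n:ℝ) := by
      rw [sub_nonneg, div_le_one (by linarith)]; exact hn'
    have h3 : 0 ≤ (1 - s) / (4 * D * n) := by positivity
    nlinarith [mul_nonneg h3 h2]
  have hfin := mul_le_mul_of_nonneg_right hcoef (show 0 ≤ (q:ℝ) * HM.nSq u by positivity)
  show (1 - s) * q / (4 * D * n) * G * HM.nSq u ≤
    (HM.hForm q (fun w => -((-(Real.exp (-K * HM.phi w) * ρ w)) ^ s)) u z).re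
  rw [hre]
  calc (1 - s) * q / (4 * D * n) * G * HM.nSq u
      = G * ((1 - s) / (4 * D * n) * (q * HM.nSq u)) := by ring
    _ ≤ _ := by
      apply mul_le_mul_of_nonneg_left _ hG0
      linarith
end
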